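/- Let 𝔄 be a model with at least two elements, let S ⊆ A be a nonempty finite set, let φ be a sentence of dependence logic, let y be a variable not occurring in φ, and let Y be a unary relation symbol occurring neither in φ nor in the vocabulary of 𝔄. Then (𝔄, Y↦S), {∅} ⊨ φ if and only if 𝔄, {∅}[S/y] ⊨ 𝕋_Y^y(φ), where 𝕋_Y^y(φ) := ∃u∃u'( u ≠ u' ∧ =(u) ∧ =(u') ∧ T_Y^y(φ) ). -/

import Mathlib

/- STATEMENT 9: Main translation lemma: (𝔄,Y↦S),{∅} ⊨ φ iff 𝔄,{∅}[S/y] ⊨ 𝕋_Y^y(φ). -/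

/-- Assignments with a finite domain: a variable outside the domain is sent to `none`. -/
abbrev PAssign (A : Type) := ℕ → Option A

/-- `s[a/x]`. -/
def pupdate {A : Type} (s : PAssign A) (x : ℕ) (a : A) : PAssign A :=
  fun w => if w = x then some a else s w

/-- A model for a purely relational vocabulary `σ` with arities `ar`. -/
structure TModel (σ : Type) (ar : σ → ℕ) : Type 1 where
  A : Type
  ne : Nonempty A
  rel : ∀ R : σ, (Fin (ar R) → A) → Prop

/-- Formulas of D⁺: first-order logic in negation normal form extended with dependence,
conditional independence, inclusion and exclusion atoms. -/
inductive TLForm (σ : Type) (ar : σ → ℕ) : Type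
  | rel (R : σ) (ts : Fin (ar R) → ℕ)
  | nrel (R : σ) (ts : Fin (ar R) → ℕ)
  | eq (x y : ℕ)
  | neq (x y : ℕ)
  | dep (k : ℕ) (xs : Fin k → ℕ) (x : ℕ)                          -- =(x₁,...,x_k,x)
  | incl (k : ℕ) (xs ys : Fin k → ℕ)                              -- x̄ ⊆ ȳ
  | excl (k : ℕ) (xs ys : Fin k → ℕ)                              -- x̄ | ȳ
  | cindep (k m p : ℕ) (xs : Fin k → ℕ) (zs : Fin m → ℕ) (ys : Fin p → ℕ)  -- x̄ ⊥_{z̄} ȳ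
  | and (φ ψ : TLForm σ ar)
  | or (φ ψ : TLForm σ ar)
  | all (x : ℕ) (φ : TLForm σ ar)
  | ex (x : ℕ) (φ : TLForm σ ar)

/-- Lax team semantics for D⁺. -/
def TSat {σ : Type} {ar : σ → ℕ} (M : TModel σ ar) : Set (PAssign M.A) → TLForm σ ar → Prop
  | U, .rel R ts => ∀ s ∈ U, ∃ vv : Fin (ar R) → M.A,
      (∀ i, s (ts i) = some (vv i)) ∧ M.rel R vv
  | U, .nrel R ts => ∀ s ∈ U, ∃ vv : Fin (ar R) → M.A,
      (∀ i, s (ts i) = some (vv i)) ∧ ¬ M.rel R vv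
  | U, .eq x y => ∀ s ∈ U, ∃ a : M.A, s x = some a ∧ s y = some a
  | U, .neq x y => ∀ s ∈ U, ∃ a b : M.A, s x = some a ∧ s y = some b ∧ a ≠ b
  | U, .dep _ xs x => ∀ s ∈ U, ∀ t ∈ U, (∀ i, s (xs i) = t (xs i)) → s x = t x
  | U, .incl _ xs ys => ∀ s ∈ U, ∃ t ∈ U, ∀ i, t (ys i) = s (xs i)
  | U, .excl _ xs ys => ∀ s ∈ U, ∀ t ∈ U, ¬ (∀ i, s (xs i) = t (ys i))
  | U, .cindep _ _ _ xs zs ys => ∀ s ∈ U, ∀ s' ∈ U, (∀ i, s (zs i) = s' (zs i)) →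
      ∃ t ∈ U, (∀ i, t (xs i) = s (xs i)) ∧ (∀ i, t (zs i) = s (zs i)) ∧
        (∀ i, t (ys i) = s' (ys i))
  | U, .and φ ψ => TSat M U φ ∧ TSat M U ψ
  | U, .or φ ψ => ∃ U₀ U₁ : Set (PAssign M.A),
      U₀ ⊆ U ∧ U₁ ⊆ U ∧ U₀ ∪ U₁ = U ∧ TSat M U₀ φ ∧ TSat M U₁ ψ
  | U, .all x φ => TSat M {t | ∃ s ∈ U, ∃ a : M.A, t = pupdate s x a} φ
  | U, .ex x φ => ∃ f : PAssign M.A → Set M.A, (∀ s ∈ U, (f s).Nonempty) ∧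
      TSat M {t | ∃ s ∈ U, ∃ a ∈ f s, t = pupdate s x a} φ


/-- Free variables of a D⁺ formula. -/
def TLForm.freeVars {σ : Type} {ar : σ → ℕ} : TLForm σ ar → Finset ℕ
  | .rel _ ts => Finset.univ.image ts
  | .nrel _ ts => Finset.univ.image ts
  | .eq x y => {x, y}
  | .neq x y => {x, y}
  | .dep _ xs x => insert x (Finset.univ.image xs)
  | .incl _ xs ys => Finset.univ.image xs ∪ Finset.univ.image ys
  | .excl _ xs ys => Finset.univ.image xs ∪ Finset.univ.image ys
  | .cindep _ _ _ xs zs ys =>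
      Finset.univ.image xs ∪ Finset.univ.image zs ∪ Finset.univ.image ys
  | .and φ ψ => φ.freeVars ∪ ψ.freeVars
  | .or φ ψ => φ.freeVars ∪ ψ.freeVars
  | .all x φ => φ.freeVars.erase x
  | .ex x φ => φ.freeVars.erase x

/-- All variables occurring in a D⁺ formula (free or bound). -/
def TLForm.vars {σ : Type} {ar : σ → ℕ} : TLForm σ ar → Finset ℕ
  | .rel _ ts => Finset.univ.image ts
  | .nrel _ ts => Finset.univ.image ts
  | .eq x y => {x, y}
  | .neq x y => {x, y}
  | .dep _ xs x => insert x (Finset.univ.image xs)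
  | .incl _ xs ys => Finset.univ.image xs ∪ Finset.univ.image ys
  | .excl _ xs ys => Finset.univ.image xs ∪ Finset.univ.image ys
  | .cindep _ _ _ xs zs ys =>
      Finset.univ.image xs ∪ Finset.univ.image zs ∪ Finset.univ.image ys
  | .and φ ψ => φ.vars ∪ ψ.vars
  | .or φ ψ => φ.vars ∪ ψ.vars
  | .all x φ => insert x φ.vars
  | .ex x φ => insert x φ.vars

/-- The formula is a formula of dependence logic: it uses only first-order constructs
and dependence atoms. -/
def TLForm.IsDL {σ : Type} {ar : σ → ℕ} : TLForm σ ar → Prop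
  | .rel _ _ => True
  | .nrel _ _ => True
  | .eq _ _ => True
  | .neq _ _ => True
  | .dep _ _ _ => True
  | .incl _ _ _ => False
  | .excl _ _ _ => False
  | .cindep _ _ _ _ _ _ => False
  | .and φ ψ => φ.IsDL ∧ ψ.IsDL
  | .or φ ψ => φ.IsDL ∧ ψ.IsDL
  | .all _ φ => φ.IsDL
  | .ex _ φ => φ.IsDL

/-- The relation symbol `R₀` occurs in the formula. -/
def TLForm.UsesRel {σ : Type} {ar : σ → ℕ} (R₀ : σ) : TLForm σ ar → Prop
  | .rel R _ => R = R₀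
  | .nrel R _ => R = R₀
  | .and φ ψ => φ.UsesRel R₀ ∨ ψ.UsesRel R₀
  | .or φ ψ => φ.UsesRel R₀ ∨ ψ.UsesRel R₀
  | .all _ φ => φ.UsesRel R₀
  | .ex _ φ => φ.UsesRel R₀
  | _ => False

/-- The vocabulary `τ ∪ {Y}` where `Y` is a fresh unary relation symbol (`Sum.inr ()`). -/
def arY {σ : Type} (ar : σ → ℕ) : σ ⊕ Unit → ℕ := Sum.elim ar fun _ => 1

/-- The expansion `(𝔄, Y ↦ S)` of `𝔄` interpreting the fresh unary symbol `Y` as `S`. -/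
def expandY {σ : Type} {ar : σ → ℕ} (M : TModel σ ar) (S : Set M.A) :
    TModel (σ ⊕ Unit) (arY ar) where
  A := M.A
  ne := M.ne
  rel := fun R => match R with
    | Sum.inl R' => M.rel R'
    | Sum.inr _ => fun w => w ⟨0, Nat.one_pos⟩ ∈ S

/-- The translation `T_Y^y` (with fixed parameter variables `y,v,u,u'`) from dependence
logic over `τ ∪ {Y}` into D⁺ over `τ`.  The `Finset` argument accumulates the variables
quantified superordinate to the current subformula in the translated sentence, and the
`Bool` argument records whether the current subformula is subordinate to a disjunction. -/
def Ttr {σ : Type} {ar : σ → ℕ} (y v u u' : ℕ) :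
    Finset ℕ → Bool → TLForm (σ ⊕ Unit) (arY ar) → TLForm σ ar
  | _, _, .rel (Sum.inl R) ts => .rel R ts
  | _, _, .rel (Sum.inr _) ts => .incl 1 (fun _ => ts ⟨0, Nat.one_pos⟩) (fun _ => y)
  | _, _, .nrel (Sum.inl R) ts => .nrel R ts
  | _, _, .nrel (Sum.inr _) ts => .excl 1 (fun _ => ts ⟨0, Nat.one_pos⟩) (fun _ => y)
  | _, _, .eq x z => .eq x z
  | _, _, .neq x z => .neq x z
  | _, _, .dep k xs x => .dep k xs x
  | _, _, .incl k xs ys => .incl k xs ys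
  | _, _, .excl k xs ys => .excl k xs ys
  | _, _, .cindep k m p xs zs ys => .cindep k m p xs zs ys
  | zs, b, .and φ ψ => .and (Ttr y v u u' zs b φ) (Ttr y v u u' zs b ψ)
  | zs, _, .or φ ψ =>
      let l := zs.sort (· ≤ ·)
      .ex v (.and (.cindep 1 l.length 1 (fun _ => v) l.get (fun _ => y))
        (.or (.and (Ttr y v u u' zs true φ) (.eq v u))
             (.and (Ttr y v u u' zs true ψ) (.eq v u'))))
  | zs, b, .all x φ => .all x (Ttr y v u u' (insert x zs) b φ)
  | zs, b, .ex x φ =>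
      let l := ((zs.erase x).sort (· ≤ ·))
      if b then
        .ex x (.and
          (.cindep 1 l.length 2 (fun _ => x) l.get (fun i => if i.val = 0 then y else v))
          (Ttr y v u u' (insert x zs) b φ))
      else
        .ex x (.and (.cindep 1 l.length 1 (fun _ => x) l.get (fun _ => y))
          (Ttr y v u u' (insert x zs) b φ))

/-- The restriction `s ↾ Z` of an assignment to the variables in `Z`. -/
def restrictP {A : Type} (s : PAssign A) (Z : Finset ℕ) : PAssign A :=
  fun x => if x ∈ Z then s x else none

/-- `(U,V)` is a suitable pair for `𝔄` (with domain `A`), `S ⊆ A`, `(y,v,u,u')` and a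
(sub)formula whose superordinately quantified variables are `Z` and which is subordinate
to a disjunction iff `subDisj`:
(1) the domain of `U` is `Z`, and the domain of `V` is `Z ∪ {y,u,u'}`, with `v` added
iff `subDisj`; (2) `U = V ↾ Z`; (3) `V = X[S/y]` for some team `X`; (4) all assignments
in `V` agree on `u` and on `u'`, with distinct values: `s(u) = t(u) ≠ t(u') = s(u')`. -/
def SuitablePair (A : Type) (S : Set A) (y v u u' : ℕ) (Z : Finset ℕ) (subDisj : Bool)
    (U V : Set (PAssign A)) : Prop :=
  (∀ s ∈ U, ∀ x : ℕ, (s x ≠ none ↔ x ∈ Z)) ∧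
  (∀ s ∈ V, ∀ x : ℕ,
    (s x ≠ none ↔ x ∈ (if subDisj then Z ∪ {y, v, u, u'} else Z ∪ {y, u, u'}))) ∧
  U = (fun s => restrictP s Z) '' V ∧
  (∃ X : Set (PAssign A), V = {t | ∃ s ∈ X, ∃ a ∈ S, t = pupdate s y a}) ∧
  (∀ s ∈ V, ∀ t ∈ V, s u = t u ∧ t u ≠ t u' ∧ t u' = s u')

/-- The empty assignment. -/
def emptyA {A : Type} : PAssign A := fun _ => none

section PupdateRestrict

variable {A : Type}

theorem pupdate_self (s : PAssign A) (x : ℕ) (a : A) : pupdate s x a x = some a := by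
  simp [pupdate]

theorem pupdate_of_ne (s : PAssign A) {x w : ℕ} (a : A) (h : w ≠ x) :
    pupdate s x a w = s w := by
  simp [pupdate, h]

theorem pupdate_comm (s : PAssign A) {x y : ℕ} (a b : A) (h : x ≠ y) :
    pupdate (pupdate s x a) y b = pupdate (pupdate s y b) x a := by
  funext w
  grind [pupdate]

theorem restrictP_of_mem (s : PAssign A) {Z : Finset ℕ} {x : ℕ} (h : x ∈ Z) :
    restrictP s Z x = s x := by
  simp [restrictP, h]

theorem restrictP_pupdate_of_notMem (s : PAssign A) {Z : Finset ℕ} {x : ℕ} (a : A)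
    (h : x ∉ Z) : restrictP (pupdate s x a) Z = restrictP s Z := by
  funext w
  grind [pupdate, restrictP]

theorem restrictP_pupdate_insert (s : PAssign A) (Z : Finset ℕ) (x : ℕ) (a : A) :
    restrictP (pupdate s x a) (insert x Z) = pupdate (restrictP s Z) x a := by
  funext w
  grind [pupdate, restrictP]

/-- The supplemented team `V[f/x]`. -/
def teamExt (V : Set (PAssign A)) (x : ℕ) (f : PAssign A → Set A) : Set (PAssign A) :=
  {t | ∃ s ∈ V, ∃ a ∈ f s, t = pupdate s x a}

/-- The restriction `V ↾ Z` of a team. -/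
def teamRestrict (Z : Finset ℕ) (V : Set (PAssign A)) : Set (PAssign A) :=
  (fun s => restrictP s Z) '' V

theorem teamRestrict_teamExt_comp (Z : Finset ℕ) (V : Set (PAssign A)) (x : ℕ)
    (f : PAssign A → Set A) :
    teamRestrict (insert x Z) (teamExt V x fun s => f (restrictP s Z)) =
      teamExt (teamRestrict Z V) x f := by
  ext t
  constructor
  · rintro ⟨_, ⟨s, hs, a, ha, rfl⟩, rfl⟩
    exact ⟨_, ⟨s, hs, rfl⟩, a, ha, restrictP_pupdate_insert s Z x a⟩
  · rintro ⟨_, ⟨s, hs, rfl⟩, a, ha, rfl⟩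
    exact ⟨_, ⟨s, hs, a, ha, rfl⟩, restrictP_pupdate_insert s Z x a⟩

theorem teamRestrict_teamExt (Z : Finset ℕ) (V : Set (PAssign A)) (x : ℕ)
    (g : PAssign A → Set A) :
    teamRestrict (insert x Z) (teamExt V x g) =
      teamExt (teamRestrict Z V) x fun r => {a | ∃ s ∈ V, restrictP s Z = r ∧ a ∈ g s} := by
  ext t
  constructor
  · rintro ⟨_, ⟨s, hs, a, ha, rfl⟩, rfl⟩
    exact ⟨_, ⟨s, hs, rfl⟩, a, ⟨s, hs, rfl, ha⟩, restrictP_pupdate_insert s Z x a⟩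
  · rintro ⟨_, _, a, ⟨s, hs, rfl, ha⟩, rfl⟩
    exact ⟨_, ⟨s, hs, a, ha, rfl⟩, restrictP_pupdate_insert s Z x a⟩

theorem teamRestrict_teamExt_of_notMem {Z : Finset ℕ} {x : ℕ} (hx : x ∉ Z)
    {V : Set (PAssign A)} {g : PAssign A → Set A} (hg : ∀ s ∈ V, (g s).Nonempty) :
    teamRestrict Z (teamExt V x g) = teamRestrict Z V := by
  ext t
  constructor
  · rintro ⟨_, ⟨s, hs, a, ha, rfl⟩, rfl⟩
    exact ⟨s, hs, (restrictP_pupdate_of_notMem s a hx).symm⟩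
  · rintro ⟨s, hs, rfl⟩
    obtain ⟨a, ha⟩ := hg s hs
    exact ⟨_, ⟨s, hs, a, ha, rfl⟩, restrictP_pupdate_of_notMem s a hx⟩

/-- The team `V` is of the form `X[S/y]`. -/
def YClosed (S : Set A) (y : ℕ) (V : Set (PAssign A)) : Prop :=
  ∀ s ∈ V, (∃ a ∈ S, s y = some a) ∧ ∀ a ∈ S, pupdate s y a ∈ V

/-- All assignments in `V` agree outside `Z ∪ {y}`. -/
def AgreeOff (Z : Finset ℕ) (y : ℕ) (V : Set (PAssign A)) : Prop :=
  ∀ s ∈ V, ∀ t ∈ V, ∀ w, w ∉ Z → w ≠ y → s w = t w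

/-- The invariant on the translated team: it is of the form `X[S/y]`, it is constant outside
`Z ∪ {y}`, `u` and `u'` have distinct values, and all variables in `Z` have values. -/
structure Adapted (S : Set A) (y u u' : ℕ) (Z : Finset ℕ) (V : Set (PAssign A)) : Prop where
  closed : YClosed S y V
  agree : AgreeOff Z y V
  distinct : ∀ s ∈ V, ∃ a b : A, s u = some a ∧ s u' = some b ∧ a ≠ b
  defined : ∀ s ∈ V, ∀ w ∈ Z, ∃ a : A, s w = some a

theorem YClosed.teamExt {S : Set A} {y x : ℕ} {V : Set (PAssign A)} (hV : YClosed S y V)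
    (hxy : x ≠ y) {f : PAssign A → Set A}
    (hf : ∀ s ∈ V, ∀ c ∈ S, f s ⊆ f (pupdate s y c)) :
    YClosed S y (teamExt V x f) := by
  rintro _ ⟨s, hs, a, ha, rfl⟩
  refine ⟨?_, fun c hc => ?_⟩
  · rw [pupdate_of_ne s a hxy.symm]
    exact (hV s hs).1
  · exact ⟨_, (hV s hs).2 c hc, a, hf s hs c hc ha, pupdate_comm s a c hxy⟩

theorem AgreeOff.teamExt {Z : Finset ℕ} {y : ℕ} {V : Set (PAssign A)} (hV : AgreeOff Z y V)
    (x : ℕ) (f : PAssign A → Set A) : AgreeOff (insert x Z) y (teamExt V x f) := by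
  rintro _ ⟨s, hs, a, -, rfl⟩ _ ⟨t, ht, b, -, rfl⟩ w hw hwy
  rw [Finset.mem_insert, not_or] at hw
  rw [pupdate_of_ne s a hw.1, pupdate_of_ne t b hw.1]
  exact hV s hs t ht w hw.2 hwy

theorem distinct_teamExt {u u' x : ℕ} {V : Set (PAssign A)}
    (hV : ∀ s ∈ V, ∃ a b : A, s u = some a ∧ s u' = some b ∧ a ≠ b)
    (hu : u ≠ x) (hu' : u' ≠ x) (f : PAssign A → Set A) :
    ∀ s ∈ teamExt V x f, ∃ a b : A, s u = some a ∧ s u' = some b ∧ a ≠ b := by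
  rintro _ ⟨s, hs, c, -, rfl⟩
  rw [pupdate_of_ne s c hu, pupdate_of_ne s c hu']
  exact hV s hs

theorem defined_teamExt {Z : Finset ℕ} {V : Set (PAssign A)}
    (hV : ∀ s ∈ V, ∀ w ∈ Z, ∃ a : A, s w = some a) (x : ℕ) (f : PAssign A → Set A) :
    ∀ s ∈ teamExt V x f, ∀ w ∈ insert x Z, ∃ a : A, s w = some a := by
  rintro _ ⟨s, hs, c, -, rfl⟩ w hw
  by_cases hwx : w = x
  · exact ⟨c, hwx ▸ pupdate_self s x c⟩
  · rw [pupdate_of_ne s c hwx]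
    exact hV s hs w ((Finset.mem_insert.1 hw).resolve_left hwx)

end PupdateRestrict

section Independence

variable {σ : Type} {ar : σ → ℕ} {M : TModel σ ar}

theorem TSat_cindep_of_yClosed {S : Set M.A} {y x m p : ℕ} {V : Set (PAssign M.A)}
    {zs : Fin m → ℕ} {ys : Fin p → ℕ} (hV : YClosed S y V) (hx : x ≠ y)
    (hzs : ∀ i, zs i ≠ y)
    (hys : ∀ i, ys i = y ∨ ∀ s ∈ V, ∀ t ∈ V, s (ys i) = t (ys i)) :
    TSat M V (.cindep 1 m p (fun _ => x) zs ys) := by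
  intro s hs s' hs' _
  obtain ⟨c, hc, hcy⟩ := (hV s' hs').1
  have hmem := (hV s hs).2 c hc
  refine ⟨_, hmem, fun _ => pupdate_of_ne s c hx, fun i => pupdate_of_ne s c (hzs i),
    fun i => ?_⟩
  rcases hys i with h | h
  · rw [h, pupdate_self, hcy]
  · exact h _ hmem s' hs'

theorem pupdate_mem_of_cindep {y x m p : ℕ} {V : Set (PAssign M.A)}
    {zs : Fin m → ℕ} {ys : Fin p → ℕ} (h : TSat M V (.cindep 1 m p (fun _ => x) zs ys))
    {i : Fin p} (hi : ys i = y)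
    (hagree : ∀ s ∈ V, ∀ t ∈ V, ∀ w, w ≠ y → w ≠ x → (∀ j, zs j ≠ w) → s w = t w)
    {s s' : PAssign M.A} (hs : s ∈ V) (hs' : s' ∈ V) (hss' : ∀ j, s (zs j) = s' (zs j))
    {c : M.A} (hc : s' y = some c) : pupdate s y c ∈ V := by
  obtain ⟨t, ht, htx, htz, hty⟩ := h s hs s' hs' hss'
  have hts : t = pupdate s y c := by
    funext w
    by_cases hwy : w = y
    · rw [hwy, pupdate_self, ← hc, ← hi, hty i]
    rw [pupdate_of_ne s c hwy]
    by_cases hwx : w = x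
    · rw [hwx]
      exact htx 0
    by_cases hw : ∀ j, zs j ≠ w
    · exact hagree t ht s hs w hwy hwx hw
    · push Not at hw
      obtain ⟨j, rfl⟩ := hw
      exact htz j
  exact hts ▸ ht

theorem sort_get_mem (Z : Finset ℕ) (i : Fin (Z.sort (· ≤ ·)).length) :
    (Z.sort (· ≤ ·)).get i ∈ Z :=
  (Finset.mem_sort (· ≤ ·)).1 (List.get_mem _ i)

theorem exists_sort_get_eq {Z : Finset ℕ} {w : ℕ} (hw : w ∈ Z) :
    ∃ i, (Z.sort (· ≤ ·)).get i = w :=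
  List.mem_iff_get.1 ((Finset.mem_sort (· ≤ ·)).2 hw)

/-- If `V` is a supplementation of a team of the form `X[S/y]` which is constant outside
`Z ∪ {y}`, and the new variable is independent of `y` given `Z`, then `V` is also of that form. -/
theorem YClosed.teamExt_of_cindep {S : Set M.A} {y x p : ℕ} {Z Z' : Finset ℕ}
    {V : Set (PAssign M.A)} {g : PAssign M.A → Set M.A} {ys : Fin p → ℕ}
    (hV : YClosed S y V) (hagree : AgreeOff Z y V) (hg : ∀ s ∈ V, (g s).Nonempty)
    (hx : x ≠ y) (hy : y ∉ Z) (hZ' : Z' = Z.erase x) (hys : ∃ i, ys i = y)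
    (h : TSat M (_root_.teamExt V x g)
      (.cindep 1 (Z'.sort (· ≤ ·)).length p (fun _ => x) (Z'.sort (· ≤ ·)).get ys)) :
    YClosed S y (_root_.teamExt V x g) := by
  obtain ⟨i, hi⟩ := hys
  have hzy : ∀ w ∈ Z', w ≠ y ∧ w ≠ x := by
    rintro w hw
    rw [hZ', Finset.mem_erase] at hw
    exact ⟨fun h => hy (h ▸ hw.2), hw.1⟩
  rintro _ ⟨s, hs, a, ha, rfl⟩
  refine ⟨?_, fun c hc => ?_⟩
  · rw [pupdate_of_ne s a hx.symm]
    exact (hV s hs).1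
  · have hsc := (hV s hs).2 c hc
    obtain ⟨a', ha'⟩ := hg _ hsc
    refine pupdate_mem_of_cindep h hi ?_
      ⟨s, hs, a, ha, rfl⟩ ⟨_, hsc, a', ha', rfl⟩ (fun j => ?_) ?_
    · intro s₁ hs₁ s₂ hs₂ w hwy hwx hw
      refine hagree.teamExt x g s₁ hs₁ s₂ hs₂ w (fun hmem => ?_) hwy
      obtain ⟨j, hj⟩ := exists_sort_get_eq (Z := Z') (w := w)
        (hZ' ▸ Finset.mem_erase.2 ⟨hwx, (Finset.mem_insert.1 hmem).resolve_left hwx⟩)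
      exact hw j hj
    · obtain ⟨h₁, h₂⟩ := hzy _ (sort_get_mem Z' j)
      rw [pupdate_of_ne _ _ h₂, pupdate_of_ne _ _ h₂, pupdate_of_ne _ _ h₁]
    · rw [pupdate_of_ne _ _ hx.symm, pupdate_self]

end Independence

section Translation

variable {σ : Type} {ar : σ → ℕ} {M : TModel σ ar} {S : Set M.A} {y v u u' : ℕ}

theorem TSat_all_iff {τ : Type} {ar' : τ → ℕ} (N : TModel τ ar') (V : Set (PAssign N.A))
    (x : ℕ) (φ : TLForm τ ar') :
    TSat N V (.all x φ) ↔ TSat N (teamExt V x fun _ => Set.univ) φ := by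
  simp [TSat, teamExt]

/-- Satisfaction in the expansion `(𝔄, Y ↦ S)`, for teams over the domain of `𝔄`. -/
def TSatY (M : TModel σ ar) (S : Set M.A) (U : Set (PAssign M.A))
    (φ : TLForm (σ ⊕ Unit) (arY ar)) : Prop :=
  TSat (expandY M S) U φ

theorem TSatY_rel_inl (U : Set (PAssign M.A)) (R : σ) (ts : Fin (ar R) → ℕ) :
    TSatY M S U (.rel (Sum.inl R) ts) ↔ TSat M U (.rel R ts) :=
  Iff.rfl

theorem TSatY_nrel_inl (U : Set (PAssign M.A)) (R : σ) (ts : Fin (ar R) → ℕ) :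
    TSatY M S U (.nrel (Sum.inl R) ts) ↔ TSat M U (.nrel R ts) :=
  Iff.rfl

theorem TSatY_rel_inr (U : Set (PAssign M.A)) (ts : Fin 1 → ℕ) :
    TSatY M S U (.rel (Sum.inr ()) ts) ↔ ∀ s ∈ U, ∃ a ∈ S, s (ts 0) = some a := by
  refine forall₂_congr fun s _ => ⟨?_, ?_⟩
  · rintro ⟨vv, hvv, hS⟩
    exact ⟨vv (0 : Fin 1), hS, hvv (0 : Fin 1)⟩
  · rintro ⟨a, ha, hsa⟩
    refine ⟨fun _ => a, fun i => ?_, ha⟩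
    obtain rfl : i = (0 : Fin 1) := Subsingleton.elim (α := Fin 1) _ _
    exact hsa

theorem TSatY_nrel_inr (U : Set (PAssign M.A)) (ts : Fin 1 → ℕ) :
    TSatY M S U (.nrel (Sum.inr ()) ts) ↔ ∀ s ∈ U, ∃ a ∉ S, s (ts 0) = some a := by
  refine forall₂_congr fun s _ => ⟨?_, ?_⟩
  · rintro ⟨vv, hvv, hS⟩
    exact ⟨vv (0 : Fin 1), hS, hvv (0 : Fin 1)⟩
  · rintro ⟨a, ha, hsa⟩
    refine ⟨fun _ => a, fun i => ?_, ha⟩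
    obtain rfl : i = (0 : Fin 1) := Subsingleton.elim (α := Fin 1) _ _
    exact hsa

theorem TSatY_eq (U : Set (PAssign M.A)) (x z : ℕ) :
    TSatY M S U (.eq x z) ↔ TSat M U (.eq x z) :=
  Iff.rfl

theorem TSatY_neq (U : Set (PAssign M.A)) (x z : ℕ) :
    TSatY M S U (.neq x z) ↔ TSat M U (.neq x z) :=
  Iff.rfl

theorem TSatY_dep (U : Set (PAssign M.A)) (k : ℕ) (xs : Fin k → ℕ) (x : ℕ) :
    TSatY M S U (.dep k xs x) ↔ TSat M U (.dep k xs x) :=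
  Iff.rfl

theorem TSatY_or (U : Set (PAssign M.A)) (φ ψ : TLForm (σ ⊕ Unit) (arY ar)) :
    TSatY M S U (.or φ ψ) ↔ ∃ U₀ U₁ : Set (PAssign M.A),
      U₀ ⊆ U ∧ U₁ ⊆ U ∧ U₀ ∪ U₁ = U ∧ TSatY M S U₀ φ ∧ TSatY M S U₁ ψ :=
  Iff.rfl

theorem TSatY_all (U : Set (PAssign M.A)) (x : ℕ) (φ : TLForm (σ ⊕ Unit) (arY ar)) :
    TSatY M S U (.all x φ) ↔ TSatY M S (teamExt U x fun _ => Set.univ) φ :=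
  TSat_all_iff (expandY M S) U x φ

theorem TSatY_ex (U : Set (PAssign M.A)) (x : ℕ) (φ : TLForm (σ ⊕ Unit) (arY ar)) :
    TSatY M S U (.ex x φ) ↔ ∃ f : PAssign M.A → Set M.A,
      (∀ s ∈ U, (f s).Nonempty) ∧ TSatY M S (teamExt U x f) φ :=
  Iff.rfl

/-- Adequacy of the translation of a single formula. -/
def Adequate (M : TModel σ ar) (S : Set M.A) (y v u u' : ℕ)
    (φ : TLForm (σ ⊕ Unit) (arY ar)) : Prop :=
  ∀ (Z : Finset ℕ) (b : Bool) (V : Set (PAssign M.A)),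
    y ∉ Z → v ∉ Z → u ∉ Z → u' ∉ Z → φ.freeVars ⊆ Z → Adapted S y u u' Z V →
    (TSatY M S (teamRestrict Z V) φ ↔ TSat M V (Ttr y v u u' Z b φ))

theorem adequate_all {x : ℕ} {φ : TLForm (σ ⊕ Unit) (arY ar)} (ih : Adequate M S y v u u' φ)
    (hx : y ≠ x ∧ v ≠ x ∧ u ≠ x ∧ u' ≠ x) : Adequate M S y v u u' (.all x φ) := by
  intro Z b V hy hv hu hu' hfv hV
  rw [TSatY_all, Ttr, TSat_all_iff]
  have key := ih (insert x Z) b (teamExt V x fun _ => Set.univ)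
    (by simp [hx.1, hy]) (by simp [hx.2.1, hv]) (by simp [hx.2.2.1, hu])
    (by simp [hx.2.2.2, hu']) (Finset.subset_insert_iff.2 hfv)
    ⟨hV.closed.teamExt hx.1.symm fun _ _ _ _ => subset_rfl, hV.agree.teamExt x _,
      distinct_teamExt hV.distinct hx.2.2.1 hx.2.2.2 _,
        defined_teamExt hV.defined x _⟩
  rw [← key, teamRestrict_teamExt_comp Z V x fun _ => Set.univ]

theorem adequate_ex_aux {x p : ℕ} {ys : Fin p → ℕ} {φ : TLForm (σ ⊕ Unit) (arY ar)}
    {Z : Finset ℕ} {V : Set (PAssign M.A)} {ψ : TLForm σ ar}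
    (ih : ∀ V' : Set (PAssign M.A), Adapted S y u u' (insert x Z) V' →
      (TSatY M S (teamRestrict (insert x Z) V') φ ↔ TSat M V' ψ))
    (hx : y ≠ x ∧ v ≠ x ∧ u ≠ x ∧ u' ≠ x) (hy : y ∉ Z) (hv : v ∉ Z)
    (hys : ∀ i, ys i = y ∨ ys i = v) (hysy : ∃ i, ys i = y)
    (hV : Adapted S y u u' Z V) :
    TSatY M S (teamRestrict Z V) (.ex x φ) ↔
      TSat M V (.ex x (.and (.cindep 1 ((Z.erase x).sort (· ≤ ·)).length p (fun _ => x)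
        ((Z.erase x).sort (· ≤ ·)).get ys) ψ)) := by
  rw [TSatY_ex]
  constructor
  · rintro ⟨f, hf, hsat⟩
    have hV' : Adapted S y u u' (insert x Z) (teamExt V x fun s => f (restrictP s Z)) :=
      ⟨hV.closed.teamExt hx.1.symm fun s _ c _ => by
          rw [restrictP_pupdate_of_notMem s c hy],
        hV.agree.teamExt x _, distinct_teamExt hV.distinct hx.2.2.1 hx.2.2.2 _,
        defined_teamExt hV.defined x _⟩
    refine ⟨fun s => f (restrictP s Z), fun s hs => hf _ ⟨s, hs, rfl⟩, ?_, (ih _ hV').1 ?_⟩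
    · refine TSat_cindep_of_yClosed hV'.closed hx.1.symm (fun i h => ?_) fun i => ?_
      · exact hy (h ▸ Finset.mem_of_mem_erase (sort_get_mem _ i))
      · by_cases hi : ys i = y
        · exact Or.inl hi
        · have hvi := (hys i).resolve_left hi
          exact Or.inr fun s hs t ht => hV'.agree s hs t ht _
            (by rw [hvi]; simp [hx.2.1, hv]) hi
    · rw [teamRestrict_teamExt_comp]
      exact hsat
  · rintro ⟨g, hg, hind, hsat⟩
    have hV' : Adapted S y u u' (insert x Z) (teamExt V x g) :=
      ⟨hV.closed.teamExt_of_cindep hV.agree hg hx.1.symm hy rfl hysy hind,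
        hV.agree.teamExt x g, distinct_teamExt hV.distinct hx.2.2.1 hx.2.2.2 g,
        defined_teamExt hV.defined x g⟩
    have hsat' := (ih _ hV').2 hsat
    rw [teamRestrict_teamExt] at hsat'
    refine ⟨_, ?_, hsat'⟩
    rintro _ ⟨s, hs, rfl⟩
    obtain ⟨a, ha⟩ := hg s hs
    exact ⟨a, s, hs, rfl, ha⟩

theorem adequate_ex {x : ℕ} {φ : TLForm (σ ⊕ Unit) (arY ar)} (ih : Adequate M S y v u u' φ)
    (hx : y ≠ x ∧ v ≠ x ∧ u ≠ x ∧ u' ≠ x) : Adequate M S y v u u' (.ex x φ) := by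
  intro Z b V hy hv hu hu' hfv hV
  have key := fun V' hV' => ih (insert x Z) b V'
    (by simp [hx.1, hy]) (by simp [hx.2.1, hv]) (by simp [hx.2.2.1, hu])
    (by simp [hx.2.2.2, hu']) (Finset.subset_insert_iff.2 hfv) hV'
  cases b
  · exact adequate_ex_aux key hx hy hv (fun _ => Or.inl rfl) ⟨0, rfl⟩ hV
  · exact adequate_ex_aux key hx hy hv (fun i => by by_cases h : i.val = 0 <;> simp [h])
      ⟨0, rfl⟩ hV

/-- The part of a `v`-supplementation on which `v` equals `w` is adapted, provided that the
supplementation itself is of the form `X[S/y]`. -/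
theorem Adapted.sep_eq {Z : Finset ℕ} {V : Set (PAssign M.A)} {g : PAssign M.A → Set M.A}
    {w : ℕ} (hV : Adapted S y u u' Z V) (hclosed : YClosed S y (teamExt V v g))
    (hyv : y ≠ v) (hvu : v ≠ u) (hvu' : v ≠ u') (hw : w ∉ Z) (hwy : w ≠ y) (hwv : w ≠ v) :
    Adapted S y u u' Z {t ∈ teamExt V v g | t v = t w} := by
  refine ⟨fun s hs => ⟨(hclosed s hs.1).1, fun a ha => ⟨(hclosed s hs.1).2 a ha, ?_⟩⟩, ?_,
    fun s hs => distinct_teamExt hV.distinct hvu.symm hvu'.symm g s hs.1,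
    fun s hs w hw => defined_teamExt hV.defined v g s hs.1 w (Finset.mem_insert_of_mem hw)⟩
  · rw [pupdate_of_ne s a hyv.symm, pupdate_of_ne s a hwy]
    exact hs.2
  · have hagree := hV.agree.teamExt v g
    intro s hs t ht z hz hzy
    by_cases hzv : z = v
    · rw [hzv, hs.2, ht.2]
      exact hagree s hs.1 t ht.1 w (by simp [hwv, hw]) hwy
    · exact hagree s hs.1 t ht.1 z (by simp [hzv, hz]) hzy

theorem adequate_or {φ ψ : TLForm (σ ⊕ Unit) (arY ar)} (ihφ : Adequate M S y v u u' φ)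
    (ihψ : Adequate M S y v u u' ψ)
    (hdist : y ≠ v ∧ y ≠ u ∧ y ≠ u' ∧ v ≠ u ∧ v ≠ u' ∧ u ≠ u') :
    Adequate M S y v u u' (.or φ ψ) := by
  obtain ⟨hyv, hyu, hyu', hvu, hvu', -⟩ := hdist
  intro Z b V hy hv hu hu' hfv hV
  have hsep := fun (g : PAssign M.A → Set M.A) (hcl : YClosed S y (teamExt V v g)) =>
    And.intro (hV.sep_eq hcl hyv hvu hvu' hu hyu.symm hvu.symm)
      (hV.sep_eq hcl hyv hvu hvu' hu' hyu'.symm hvu'.symm)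
  have keyφ := fun V' hV' => ihφ Z true V' hy hv hu hu' (Finset.union_subset_left hfv) hV'
  have keyψ := fun V' hV' => ihψ Z true V' hy hv hu hu' (Finset.union_subset_right hfv) hV'
  rw [TSatY_or]
  constructor
  · rintro ⟨U₀, U₁, h₀, h₁, hU, hφ, hψ⟩
    let g : PAssign M.A → Set M.A := fun s =>
      {a | (s u = some a ∧ restrictP s Z ∈ U₀) ∨ (s u' = some a ∧ restrictP s Z ∈ U₁)}
    have hg : ∀ s ∈ V, (g s).Nonempty := by
      intro s hs
      obtain ⟨a, b, ha, hb, -⟩ := hV.distinct s hs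
      have : restrictP s Z ∈ U₀ ∪ U₁ := hU ▸ ⟨s, hs, rfl⟩
      rcases this with h | h
      · exact ⟨a, Or.inl ⟨ha, h⟩⟩
      · exact ⟨b, Or.inr ⟨hb, h⟩⟩
    have hcl : YClosed S y (teamExt V v g) := hV.closed.teamExt hyv.symm fun s _ c _ a ha => by
      simpa only [g, Set.mem_ofPred_eq, pupdate_of_ne s c hyu.symm, pupdate_of_ne s c hyu'.symm,
        restrictP_pupdate_of_notMem s c hy] using ha
    have hr₀ : teamRestrict Z {t ∈ teamExt V v g | t v = t u} = U₀ := by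
      ext r
      constructor
      · rintro ⟨_, ⟨⟨s, hs, a, ha, rfl⟩, heq⟩, rfl⟩
        obtain ⟨a', b', ha', hb', hne⟩ := hV.distinct s hs
        simp only [restrictP_pupdate_of_notMem s a hv]
        rw [pupdate_self, pupdate_of_ne s a hvu.symm] at heq
        rcases ha with h | h
        · exact h.2
        · grind
      · intro hr
        obtain ⟨s, hs, rfl⟩ := h₀ hr
        obtain ⟨a, b, ha, hb, -⟩ := hV.distinct s hs
        refine ⟨_, ⟨⟨s, hs, a, Or.inl ⟨ha, hr⟩, rfl⟩, ?_⟩,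
          restrictP_pupdate_of_notMem s a hv⟩
        rw [pupdate_self, pupdate_of_ne s a hvu.symm, ha]
    have hr₁ : teamRestrict Z {t ∈ teamExt V v g | t v = t u'} = U₁ := by
      ext r
      constructor
      · rintro ⟨_, ⟨⟨s, hs, a, ha, rfl⟩, heq⟩, rfl⟩
        obtain ⟨a', b', ha', hb', hne⟩ := hV.distinct s hs
        simp only [restrictP_pupdate_of_notMem s a hv]
        rw [pupdate_self, pupdate_of_ne s a hvu'.symm] at heq
        rcases ha with h | h
        · grind
        · exact h.2
      · intro hr
        obtain ⟨s, hs, rfl⟩ := h₁ hr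
        obtain ⟨a, b, ha, hb, -⟩ := hV.distinct s hs
        refine ⟨_, ⟨⟨s, hs, b, Or.inr ⟨hb, hr⟩, rfl⟩, ?_⟩,
          restrictP_pupdate_of_notMem s b hv⟩
        rw [pupdate_self, pupdate_of_ne s b hvu'.symm, hb]
    obtain ⟨hA₀, hA₁⟩ := hsep g hcl
    have hdist' := distinct_teamExt hV.distinct hvu.symm hvu'.symm g
    refine ⟨g, hg, ?_, _, _, Set.sep_subset (teamExt V v g) fun t => t v = t u,
      Set.sep_subset (teamExt V v g) fun t => t v = t u', ?_,
      ⟨(keyφ _ hA₀).1 (hr₀ ▸ hφ), ?_⟩, ⟨(keyψ _ hA₁).1 (hr₁ ▸ hψ), ?_⟩⟩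
    · exact TSat_cindep_of_yClosed hcl hyv.symm
        (fun i h => hy (h ▸ sort_get_mem Z i)) fun _ => Or.inl rfl
    · refine Set.Subset.antisymm (Set.union_subset (Set.sep_subset _ _) (Set.sep_subset _ _)) ?_
      rintro _ ⟨s, hs, a, ha, rfl⟩
      have hmem : pupdate s v a ∈ teamExt V v g := ⟨s, hs, a, ha, rfl⟩
      rcases ha with h | h
      · exact Or.inl ⟨hmem, by rw [pupdate_self, pupdate_of_ne s a hvu.symm, h.1]⟩
      · exact Or.inr ⟨hmem, by rw [pupdate_self, pupdate_of_ne s a hvu'.symm, h.1]⟩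
    · intro s hs
      obtain ⟨a, b, ha, hb, -⟩ := hdist' s hs.1
      exact ⟨a, hs.2.trans ha, ha⟩
    · intro s hs
      obtain ⟨a, b, ha, hb, -⟩ := hdist' s hs.1
      exact ⟨b, hs.2.trans hb, hb⟩
  · rintro ⟨g, hg, hind, V₀, V₁, h₀, h₁, hU, ⟨hφ, heq₀⟩, ⟨hψ, heq₁⟩⟩
    have hcl : YClosed S y (teamExt V v g) :=
      hV.closed.teamExt_of_cindep hV.agree hg hyv.symm hy (Finset.erase_eq_of_notMem hv).symm
        ⟨0, rfl⟩ hind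
    obtain ⟨hA₀, hA₁⟩ := hsep g hcl
    have hdist' := distinct_teamExt hV.distinct hvu.symm hvu'.symm g
    have heq₀' : V₀ = {t ∈ teamExt V v g | t v = t u} := by
      refine Set.Subset.antisymm (fun s hs => ⟨h₀ hs, ?_⟩) fun s hs => ?_
      · obtain ⟨a, ha, hb⟩ := heq₀ s hs
        exact ha.trans hb.symm
      · have : s ∈ V₀ ∪ V₁ := hU ▸ hs.1
        rcases this with h | h
        · exact h
        · obtain ⟨a, b, ha, hb, hne⟩ := hdist' s hs.1
          obtain ⟨c, hc, hc'⟩ := heq₁ s h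
          have := hs.2
          grind
    have heq₁' : V₁ = {t ∈ teamExt V v g | t v = t u'} := by
      refine Set.Subset.antisymm (fun s hs => ⟨h₁ hs, ?_⟩) fun s hs => ?_
      · obtain ⟨a, ha, hb⟩ := heq₁ s hs
        exact ha.trans hb.symm
      · have : s ∈ V₀ ∪ V₁ := hU ▸ hs.1
        rcases this with h | h
        · obtain ⟨a, b, ha, hb, hne⟩ := hdist' s hs.1
          obtain ⟨c, hc, hc'⟩ := heq₀ s h
          have := hs.2
          grind
        · exact h
    have hunion : teamRestrict Z V₀ ∪ teamRestrict Z V₁ = teamRestrict Z V := by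
      rw [← teamRestrict_teamExt_of_notMem hv hg, teamRestrict, teamRestrict, ← Set.image_union,
        hU]
      rfl
    exact ⟨teamRestrict Z V₀, teamRestrict Z V₁, hunion ▸ Set.subset_union_left,
      hunion ▸ Set.subset_union_right, hunion, (keyφ _ (heq₀' ▸ hA₀)).2 hφ,
      (keyψ _ (heq₁' ▸ hA₁)).2 hψ⟩

theorem adequate_of_isDL (hdist : y ≠ v ∧ y ≠ u ∧ y ≠ u' ∧ v ≠ u ∧ v ≠ u' ∧ u ≠ u')
    (φ : TLForm (σ ⊕ Unit) (arY ar)) (hDL : φ.IsDL)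
    (hfresh : y ∉ φ.vars ∧ v ∉ φ.vars ∧ u ∉ φ.vars ∧ u' ∉ φ.vars) :
    Adequate M S y v u u' φ := by
  induction φ with
  | rel R ts =>
    intro Z b V hy hv hu hu' hfv hV
    have hts : ∀ i (s : PAssign M.A), restrictP s Z (ts i) = s (ts i) := fun i s =>
      restrictP_of_mem s (hfv (Finset.mem_image_of_mem ts (Finset.mem_univ i)))
    rcases R with R | R
    · refine (TSatY_rel_inl _ R ts).trans (Set.forall_mem_image.trans ?_)
      exact forall₂_congr fun s _ => exists_congr fun vv =>
        and_congr (forall_congr' fun i => by rw [← hts i s]) Iff.rfl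
    · refine (TSatY_rel_inr _ ts).trans (Set.forall_mem_image.trans ?_)
      refine forall₂_congr fun s hs => ?_
      rw [hts (0 : Fin 1) s]
      constructor
      · rintro ⟨a, ha, hsa⟩
        exact ⟨_, (hV.closed s hs).2 a ha, fun _ => (pupdate_self s y a).trans hsa.symm⟩
      · rintro ⟨t, ht, hty⟩
        obtain ⟨a, ha, hta⟩ := (hV.closed t ht).1
        exact ⟨a, ha, (hty 0).symm.trans hta⟩
  | nrel R ts =>
    intro Z b V hy hv hu hu' hfv hV
    have hmem : ∀ i, ts i ∈ Z := fun i =>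
      hfv (Finset.mem_image_of_mem ts (Finset.mem_univ i))
    have hts : ∀ i (s : PAssign M.A), restrictP s Z (ts i) = s (ts i) := fun i s =>
      restrictP_of_mem s (hmem i)
    rcases R with R | R
    · refine (TSatY_nrel_inl _ R ts).trans (Set.forall_mem_image.trans ?_)
      exact forall₂_congr fun s _ => exists_congr fun vv =>
        and_congr (forall_congr' fun i => by rw [← hts i s]) Iff.rfl
    · refine (TSatY_nrel_inr _ ts).trans (Set.forall_mem_image.trans ?_)
      refine forall₂_congr fun s hs => ?_
      rw [hts (0 : Fin 1) s]
      constructor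
      · rintro ⟨a, ha, hsa⟩ t ht heq
        obtain ⟨c, hc, htc⟩ := (hV.closed t ht).1
        exact ha (Option.some.inj (hsa.symm.trans ((heq 0).trans htc)) ▸ hc)
      · intro h
        obtain ⟨a, ha⟩ := hV.defined s hs _ (hmem (0 : Fin 1))
        exact ⟨a, fun haS => h _ ((hV.closed s hs).2 a haS) fun _ =>
          ha.trans (pupdate_self s y a).symm, ha⟩
  | eq x z =>
    intro Z b V hy hv hu hu' hfv hV
    simp only [TLForm.freeVars, Finset.insert_subset_iff, Finset.singleton_subset_iff] at hfv
    refine (TSatY_eq _ x z).trans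
      (Set.forall_mem_image.trans (forall₂_congr fun s _ => ?_))
    simp only [restrictP_of_mem s hfv.1, restrictP_of_mem s hfv.2]
  | neq x z =>
    intro Z b V hy hv hu hu' hfv hV
    simp only [TLForm.freeVars, Finset.insert_subset_iff, Finset.singleton_subset_iff] at hfv
    refine (TSatY_neq _ x z).trans
      (Set.forall_mem_image.trans (forall₂_congr fun s _ => ?_))
    simp only [restrictP_of_mem s hfv.1, restrictP_of_mem s hfv.2]
  | dep k xs x =>
    intro Z b V hy hv hu hu' hfv hV
    have hx : x ∈ Z := hfv (Finset.mem_insert_self _ _)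
    have hxs : ∀ i, xs i ∈ Z := fun i =>
      hfv (Finset.mem_insert_of_mem (Finset.mem_image_of_mem xs (Finset.mem_univ i)))
    refine (TSatY_dep _ k xs x).trans (Set.forall_mem_image.trans (forall₂_congr fun s _ =>
      Set.forall_mem_image.trans (forall₂_congr fun t _ => ?_)))
    simp only [restrictP_of_mem _ hx, restrictP_of_mem _ (hxs _)]
  | incl => exact hDL.elim
  | excl => exact hDL.elim
  | cindep => exact hDL.elim
  | and φ ψ ihφ ihψ =>
    simp only [TLForm.vars, Finset.mem_union, not_or] at hfresh
    intro Z b V hy hv hu hu' hfv hV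
    exact and_congr
      (ihφ hDL.1 (by tauto) Z b V hy hv hu hu' (Finset.union_subset_left hfv) hV)
      (ihψ hDL.2 (by tauto) Z b V hy hv hu hu' (Finset.union_subset_right hfv) hV)
  | or φ ψ ihφ ihψ =>
    simp only [TLForm.vars, Finset.mem_union, not_or] at hfresh
    exact adequate_or (ihφ hDL.1 (by tauto)) (ihψ hDL.2 (by tauto)) hdist
  | all x φ ih =>
    simp only [TLForm.vars, Finset.mem_insert, not_or] at hfresh
    exact adequate_all (ih hDL (by tauto)) (by tauto)
  | ex x φ ih =>
    simp only [TLForm.vars, Finset.mem_insert, not_or] at hfresh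
    exact adequate_ex (ih hDL (by tauto)) (by tauto)

end Translation

/-- Let `𝔄` be a model with at least two elements, `S ⊆ A` a nonempty finite set, `φ` a
sentence of dependence logic, `y` a variable not occurring in `φ` (and `v,u,u'` the
further fixed fresh variables of the translation), and `Y` a unary relation symbol
occurring neither in `φ` nor in the vocabulary of `𝔄`.  Then `(𝔄,Y↦S),{∅} ⊨ φ` iff
`𝔄,{∅}[S/y] ⊨ 𝕋_Y^y(φ)`, where `𝕋_Y^y(φ) = ∃u∃u'( u ≠ u' ∧ =(u) ∧ =(u') ∧ T_Y^y(φ) )`. -/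
theorem stmt9 (σ : Type) (ar : σ → ℕ) (M : TModel σ ar)
    (htwo : ∃ a b : M.A, a ≠ b)
    (S : Set M.A) (hSne : S.Nonempty) (hSfin : S.Finite)
    (φ : TLForm (σ ⊕ Unit) (arY ar))
    (hDL : φ.IsDL) (hsent : φ.freeVars = ∅)
    (hY : ¬ φ.UsesRel (Sum.inr ()))
    (y v u u' : ℕ)
    (hdist : y ≠ v ∧ y ≠ u ∧ y ≠ u' ∧ v ≠ u ∧ v ≠ u' ∧ u ≠ u')
    (hfresh : y ∉ φ.vars ∧ v ∉ φ.vars ∧ u ∉ φ.vars ∧ u' ∉ φ.vars) :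
    TSat (expandY M S) {(emptyA : PAssign M.A)} φ ↔
      TSat M {t | ∃ a ∈ S, t = pupdate emptyA y a}
        (.ex u (.ex u' (.and (.neq u u') (.and (.dep 0 Fin.elim0 u)
          (.and (.dep 0 Fin.elim0 u') (Ttr y v u u' ∅ false φ)))))) := by
  change TSatY M S {emptyA} φ ↔ _
  obtain ⟨hyv, hyu, hyu', hvu, hvu', huu'⟩ := id hdist
  have key := fun V hV => adequate_of_isDL (M := M) (S := S) hdist φ hDL hfresh ∅ false V
    (by simp) (by simp) (by simp) (by simp) hsent.subset hV
  have hempty : ∀ s : PAssign M.A, restrictP s ∅ = emptyA := fun s => by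
    funext w
    simp [restrictP, emptyA]
  have hbase : teamRestrict ∅ {t : PAssign M.A | ∃ a ∈ S, t = pupdate emptyA y a} =
      {emptyA} := by
    ext r
    constructor
    · rintro ⟨s, -, rfl⟩
      exact hempty s
    · rintro rfl
      obtain ⟨a, ha⟩ := hSne
      exact ⟨_, ⟨a, ha, rfl⟩, hempty _⟩
  have hrestr : ∀ f f' : PAssign M.A → Set M.A,
      (∀ s ∈ {t | ∃ a ∈ S, t = pupdate emptyA y a}, (f s).Nonempty) →
      (∀ s ∈ teamExt {t | ∃ a ∈ S, t = pupdate emptyA y a} u f, (f' s).Nonempty) →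
      teamRestrict ∅ (teamExt (teamExt {t | ∃ a ∈ S, t = pupdate emptyA y a} u f) u' f') =
        {emptyA} := fun f f' hf hf' => by
    rw [teamRestrict_teamExt_of_notMem (Finset.notMem_empty _) hf',
      teamRestrict_teamExt_of_notMem (Finset.notMem_empty _) hf, hbase]
  constructor
  · intro h
    obtain ⟨a, b, hab⟩ := htwo
    refine ⟨fun _ => {a}, fun _ _ => ⟨a, rfl⟩, fun _ => {b}, fun _ _ => ⟨b, rfl⟩, ?_⟩
    have hval : ∀ t ∈ teamExt (teamExt {t | ∃ a ∈ S, t = pupdate emptyA y a} u fun _ => {a})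
        u' fun _ => {b}, ∃ c ∈ S, t = pupdate (pupdate (pupdate emptyA y c) u a) u' b := by
      rintro _ ⟨_, ⟨_, ⟨c, hc, rfl⟩, _, rfl, rfl⟩, _, rfl, rfl⟩
      exact ⟨c, hc, rfl⟩
    have hu : ∀ c, pupdate (pupdate (pupdate emptyA y c) u a) u' b u = some a := fun c => by
      rw [pupdate_of_ne _ _ huu', pupdate_self]
    refine ⟨?_, ?_, ?_, (key _ ⟨?_, ?_, ?_, ?_⟩).1 ?_⟩
    · intro t ht
      obtain ⟨c, -, rfl⟩ := hval t ht
      exact ⟨a, b, hu c, pupdate_self _ _ _, hab⟩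
    · intro s hs t ht _
      obtain ⟨c, -, rfl⟩ := hval s hs
      obtain ⟨d, -, rfl⟩ := hval t ht
      rw [hu, hu]
    · intro s hs t ht _
      obtain ⟨c, -, rfl⟩ := hval s hs
      obtain ⟨d, -, rfl⟩ := hval t ht
      rw [pupdate_self, pupdate_self]
    · refine YClosed.teamExt (YClosed.teamExt ?_ hyu.symm fun _ _ _ _ => subset_rfl) hyu'.symm
        fun _ _ _ _ => subset_rfl
      rintro _ ⟨c, hc, rfl⟩
      refine ⟨⟨c, hc, pupdate_self _ _ _⟩, fun d hd => ⟨d, hd, ?_⟩⟩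
      funext w
      grind [pupdate]
    · intro s hs t ht w _ hwy
      obtain ⟨c, -, rfl⟩ := hval s hs
      obtain ⟨d, -, rfl⟩ := hval t ht
      simp [pupdate, hwy]
    · intro t ht
      obtain ⟨c, -, rfl⟩ := hval t ht
      exact ⟨a, b, hu c, pupdate_self _ _ _, hab⟩
    · simp
    · rw [← hrestr (fun _ => {a}) (fun _ => {b}) (fun _ _ => ⟨a, rfl⟩) fun _ _ => ⟨b, rfl⟩] at h
      exact h
  · rintro ⟨f, hf, f', hf', hne, hdu, hdu', hsat⟩
    have hr := hrestr f f' hf hf'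
    have hagree : AgreeOff ∅ y
        (teamExt (teamExt {t | ∃ a ∈ S, t = pupdate emptyA y a} u f) u' f') := by
      intro s hs t ht w _ hwy
      by_cases hwu : w = u
      · exact hwu ▸ hdu s hs t ht fun i => i.elim0
      by_cases hwu' : w = u'
      · exact hwu' ▸ hdu' s hs t ht fun i => i.elim0
      obtain ⟨_, ⟨_, ⟨c, hc, rfl⟩, a, ha, rfl⟩, b, hb, rfl⟩ := hs
      obtain ⟨_, ⟨_, ⟨c', hc', rfl⟩, a', ha', rfl⟩, b', hb', rfl⟩ := ht
      simp [pupdate, hwy, hwu, hwu']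
    have hclosed : YClosed S y
        (teamExt (teamExt {t | ∃ a ∈ S, t = pupdate emptyA y a} u f) u' f') := by
      intro s hs
      have hs' := hs
      obtain ⟨_, ⟨_, ⟨c, hc, rfl⟩, a, ha, rfl⟩, b, hb, rfl⟩ := hs'
      refine ⟨⟨c, hc, ?_⟩, fun d hd => ?_⟩
      · rw [pupdate_of_ne _ _ hyu', pupdate_of_ne _ _ hyu, pupdate_self]
      · have h₀ : pupdate emptyA y d ∈ {t | ∃ a ∈ S, t = pupdate emptyA y a} := ⟨d, hd, rfl⟩
        obtain ⟨a', ha'⟩ := hf _ h₀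
        have h₁ : pupdate (pupdate emptyA y d) u a' ∈
            teamExt {t | ∃ a ∈ S, t = pupdate emptyA y a} u f := ⟨_, h₀, a', ha', rfl⟩
        obtain ⟨b', hb'⟩ := hf' _ h₁
        have h₂ : pupdate (pupdate (pupdate emptyA y d) u a') u' b' ∈
            teamExt (teamExt {t | ∃ a ∈ S, t = pupdate emptyA y a} u f) u' f' :=
          ⟨_, h₁, b', hb', rfl⟩
        convert h₂ using 1
        funext w
        by_cases hwy : w = y
        · rw [hwy, pupdate_self, pupdate_of_ne _ _ hyu', pupdate_of_ne _ _ hyu, pupdate_self]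
        · rw [pupdate_of_ne _ _ hwy]
          exact hagree _ hs _ h₂ w (Finset.notMem_empty w) hwy
    have := (key _ ⟨hclosed, hagree, hne, by simp⟩).2 hsat
    rw [hr] at this
    exact this
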